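/- Let β < 2 and λ ∈ ℝ. Then ∫_0^∞ (e^{iλx} − 1 − iλx·1_{{x<1}}) · e^{β x}(e^x − 1)^{−2} dx = iλ·( ã_β + 1 − C ) + (−iλ + 1 − β)·ψ(−iλ + 2 − β) − (1 − β)·ψ(2 − β), where C is the Euler–Mascheroni constant, ψ(z) = Γ′(z)/Γ(z) is the digamma function (the logarithmic derivative of the complex Gamma function), and ã_β = ∫_0^1 x e^{−x}(1 − e^{−(1−β)x})/(1−e^{−x})^{2} dx + ∫_0^1 e^{−x}(1 − x − e^{−x})/(1−e^{−x})^{2} dx + ∫_1^∞ e^{−x}/(1−e^{−x}) dx. This gives the characteristic exponent of a Lamperti stable process of index α = 1. -/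

import Mathlib

open MeasureTheory Set

/-- The digamma function `ψ(z) = Γ′(z)/Γ(z)`, the logarithmic derivative of the
complex Gamma function. -/
noncomputable def complexDigamma (z : ℂ) : ℂ := deriv Complex.Gamma z / Complex.Gamma z

open Filter Topology Asymptotics

lemma aux_int_Ioc {f : ℝ → ℂ} (hc : ContinuousOn f (Ioi 0))
    (h0 : f =O[𝓝[>] 0] (fun _ => (1:ℝ))) : IntegrableOn f (Ioc 0 1) := by
  obtain ⟨C, hC⟩ := h0.bound
  obtain ⟨u, hu, hu'⟩ := (mem_nhdsGT_iff_exists_Ioo_subset).1 hC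
  have hu0 : (0:ℝ) < u := hu
  have h1 : IntegrableOn f (Ioo 0 u) := by
    have : IsFiniteMeasure (volume.restrict (Ioo 0 u)) := ⟨by simp⟩
    refine Integrable.of_bound (C := C) ?_ ?_
    · exact (hc.mono (fun x hx => hx.1)).aestronglyMeasurable measurableSet_Ioo
    · filter_upwards [ae_restrict_mem measurableSet_Ioo] with x hx
      simpa using hu' hx
  have h2 : IntegrableOn f (Icc u 1) :=
    (hc.mono (fun x hx => lt_of_lt_of_le hu0 hx.1)).integrableOn_Icc
  refine (h1.union h2).mono_set ?_
  intro x hx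
  rcases lt_or_ge x u with h | h
  · exact Or.inl ⟨hx.1, h⟩
  · exact Or.inr ⟨h, hx.2⟩

lemma aux_int_tail {f : ℝ → ℂ} {b : ℝ} (hb : 0 < b) (hc : ContinuousOn f (Ioi 0))
    (h1 : f =O[atTop] (fun x => Real.exp (-b * x))) :
    IntegrableOn f (Ioi 1) := by
  have hs : Ici (1:ℝ) ⊆ Ioi 0 := fun x hx => mem_Ioi.2 (lt_of_lt_of_le one_pos hx)
  have hs' : Ioi (1:ℝ) ⊆ Ioi 0 := fun x hx => mem_Ioi.2 (lt_trans one_pos hx)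
  have := integrable_of_isBigO_exp_neg (f := fun x => ‖f x‖) hb (a := 1) (hc.mono hs).norm
    h1.norm_left
  exact (integrable_norm_iff ((hc.mono hs').aestronglyMeasurable measurableSet_Ioi)).1 this

lemma aux_int_Ioi {f : ℝ → ℂ} {b : ℝ} (hb : 0 < b) (hc : ContinuousOn f (Ioi 0))
    (h0 : f =O[𝓝[>] 0] (fun _ => (1:ℝ))) (h1 : f =O[atTop] (fun x => Real.exp (-b * x))) :
    IntegrableOn f (Ioi 0) := by
  rw [← Ioc_union_Ioi_eq_Ioi (zero_le_one)]
  exact (aux_int_Ioc hc h0).union (aux_int_tail hb hc h1)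

lemma aux_q {x : ℝ} (hx : 0 < x) : x / (1 + x) ≤ 1 - Real.exp (-x) := by
  have h1 := Real.add_one_le_exp x
  rw [Real.exp_neg]
  have : (Real.exp x)⁻¹ ≤ (1 + x)⁻¹ := by
    gcongr; linarith
  have h2 : x / (1+x) = 1 - (1+x)⁻¹ := by field_simp; ring
  linarith

/-- `1 - e^{-x}` as a complex number. -/
noncomputable def qq (x : ℝ) : ℂ := 1 - Complex.exp (-x)

lemma qq_eq (x : ℝ) : qq x = ((1 - Real.exp (-x) : ℝ) : ℂ) := by simp [qq]

lemma qq_norm {x : ℝ} (hx : 0 < x) : x / (1 + x) ≤ ‖qq x‖ := by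
  rw [qq_eq, Complex.norm_real]
  exact (aux_q hx).trans (le_abs_self _)

lemma qq_ne {x : ℝ} (hx : 0 < x) : qq x ≠ 0 := by
  have := qq_norm hx
  have h2 : 0 < x / (1+x) := by positivity
  exact norm_pos_iff.1 (h2.trans_le this)

lemma qq_cont : Continuous qq := by unfold qq; fun_prop

lemma qq_inv_zero : (fun x => (qq x)⁻¹) =O[𝓝[>] 0] (fun x : ℝ => x⁻¹) := by
  refine IsBigO.of_bound 2 ?_
  filter_upwards [Ioo_mem_nhdsGT (zero_lt_one (α := ℝ))] with x hx
  have h1 := qq_norm hx.1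
  have hx0 := hx.1
  rw [norm_inv, norm_inv, Real.norm_of_nonneg hx0.le]
  have h2 : x / 2 ≤ ‖qq x‖ := by
    refine le_trans ?_ h1
    gcongr
    linarith [hx.2]
  calc ‖qq x‖⁻¹ ≤ (x/2)⁻¹ := by gcongr
    _ = 2 * x⁻¹ := by field_simp

lemma qq_inv_top : (fun x => (qq x)⁻¹) =O[atTop] (fun _ : ℝ => (1:ℝ)) := by
  refine IsBigO.of_bound 2 ?_
  filter_upwards [eventually_ge_atTop 1] with x hx
  have hx0 : 0 < x := by linarith
  have h1 := qq_norm hx0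
  rw [norm_inv]
  have h2 : 1 / 2 ≤ ‖qq x‖ := by
    refine le_trans ?_ h1
    rw [div_le_div_iff₀ (by norm_num) (by linarith)]; linarith
  calc ‖qq x‖⁻¹ ≤ (1/2)⁻¹ := by gcongr
    _ = _ := by norm_num

lemma div_q_zero {f : ℝ → ℂ} (h : f =O[𝓝[>] 0] (fun x => x)) :
    (fun x => f x / qq x) =O[𝓝[>] 0] (fun _ => (1:ℝ)) := by
  refine (h.mul qq_inv_zero).trans_eventuallyEq ?_
  filter_upwards [self_mem_nhdsWithin] with x hx
  exact mul_inv_cancel₀ (ne_of_gt hx)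

lemma div_q2_zero {f : ℝ → ℂ} (h : f =O[𝓝[>] 0] (fun x => x ^ 2)) :
    (fun x => f x / qq x ^ 2) =O[𝓝[>] 0] (fun _ => (1:ℝ)) := by
  have := h.mul (qq_inv_zero.pow 2)
  simp only [inv_pow] at this
  refine this.trans_eventuallyEq ?_
  filter_upwards [self_mem_nhdsWithin] with x hx
  exact mul_inv_cancel₀ (pow_ne_zero 2 (ne_of_gt hx))

lemma div_q_top {f : ℝ → ℂ} {g : ℝ → ℝ} (h : f =O[atTop] g) :
    (fun x => f x / qq x) =O[atTop] g := by
  simpa [div_eq_mul_inv] using h.mul qq_inv_top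

lemma div_q2_top {f : ℝ → ℂ} {g : ℝ → ℝ} (h : f =O[atTop] g) :
    (fun x => f x / qq x ^ 2) =O[atTop] g := by
  simpa [div_eq_mul_inv] using h.mul (qq_inv_top.pow 2)

lemma exp_top (s : ℂ) {b : ℝ} (h : b ≤ s.re) :
    (fun x : ℝ => Complex.exp (-(s * x))) =O[atTop] (fun x => Real.exp (-b * x)) := by
  refine IsBigO.of_bound 1 ?_
  filter_upwards [eventually_ge_atTop 0] with x hx
  rw [Complex.norm_exp, Real.norm_of_nonneg (Real.exp_pos _).le, one_mul]
  gcongr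
  simp
  nlinarith

lemma exp_zero2 (s : ℂ) :
    (fun x : ℝ => Complex.exp (-(s * x)) - 1 + s * x) =O[𝓝[>] 0] (fun x => x ^ 2) := by
  refine IsBigO.of_bound (‖s‖ ^ 2) ?_
  have h1 : Tendsto (fun x : ℝ => ‖-(s * (x:ℂ))‖) (𝓝[>] 0) (𝓝 0) := by
    have : Continuous (fun x : ℝ => ‖-(s * (x:ℂ))‖) := by fun_prop
    simpa using (this.tendsto 0).mono_left nhdsWithin_le_nhds
  filter_upwards [h1.eventually (ge_mem_nhds zero_lt_one)] with x hx
  have := Complex.norm_exp_sub_one_sub_id_le hx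
  rw [sub_neg_eq_add] at this
  refine this.trans (le_of_eq ?_)
  simp [mul_pow]

lemma x_zero (c : ℂ) : (fun x : ℝ => c * (x:ℂ)) =O[𝓝[>] 0] (fun x => x) := by
  refine IsBigO.of_bound ‖c‖ (Eventually.of_forall fun x => ?_)
  simp

lemma sq_zero : (fun x : ℝ => x ^ 2) =O[𝓝[>] 0] (fun x => x) := by
  refine IsBigO.of_bound 1 ?_
  filter_upwards [Ioo_mem_nhdsGT (zero_lt_one (α := ℝ))] with x hx
  have := hx.1; have := hx.2
  rw [Real.norm_of_nonneg (by positivity), Real.norm_of_nonneg (by positivity)]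
  nlinarith

lemma exp_zero1 (s : ℂ) :
    (fun x : ℝ => Complex.exp (-(s * x)) - 1) =O[𝓝[>] 0] (fun x => x) := by
  refine (((exp_zero2 s).trans sq_zero).sub (x_zero s)).congr_left fun x => ?_
  ring

lemma bdd_zero {f : ℝ → ℂ} (h : Continuous f) : f =O[𝓝[>] 0] (fun _ => (1:ℝ)) :=
  ((h.tendsto 0).mono_left nhdsWithin_le_nhds).isBigO_one ℝ

/-- Integrand of the digamma function. -/
noncomputable def dInt (s : ℂ) (x : ℝ) : ℂ :=
  (Complex.exp (-(1 * x)) - Complex.exp (-(s * x))) / qq x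

/-- Derivative integrand. -/
noncomputable def pInt (s : ℂ) (x : ℝ) : ℂ :=
  (Complex.exp (-(s * x)) * (1 + (s - 1) * qq x) - Complex.exp (-(1 * x))) / qq x ^ 2

lemma dInt_cont (s : ℂ) : ContinuousOn (dInt s) (Ioi 0) := by
  refine ContinuousOn.div (by fun_prop) qq_cont.continuousOn fun x hx => qq_ne hx

lemma pInt_cont (s : ℂ) : ContinuousOn (pInt s) (Ioi 0) := by
  have := qq_cont
  refine ContinuousOn.div (by fun_prop) (by fun_prop) fun x hx => pow_ne_zero 2 (qq_ne hx)

lemma dInt_zero (s : ℂ) : dInt s =O[𝓝[>] 0] (fun _ => (1:ℝ)) := by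
  refine div_q_zero (((exp_zero1 1).sub (exp_zero1 s)).congr_left fun x => ?_)
  ring

lemma pInt_zero (s : ℂ) : pInt s =O[𝓝[>] 0] (fun _ => (1:ℝ)) := by
  refine div_q2_zero ?_
  have e1 := exp_zero2 s
  have e2 := exp_zero2 1
  have e3 := (exp_zero1 s).mul (exp_zero1 1)
  have e3' : (fun x : ℝ => (Complex.exp (-(s * x)) - 1) * (Complex.exp (-(1 * x)) - 1))
      =O[𝓝[>] 0] (fun x : ℝ => x ^ 2) := by simpa [pow_two] using e3
  refine ((e1.sub (e2.const_mul_left s)).sub (e3'.const_mul_left (s - 1))).congr_left fun x => ?_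
  simp only [qq, one_mul]
  ring

lemma dInt_top (s : ℂ) : dInt s =O[atTop] (fun x => Real.exp (-(min 1 s.re) * x)) :=
  div_q_top ((exp_top 1 (by simp)).sub (exp_top s (by simp)))

lemma pInt_top (s : ℂ) : pInt s =O[atTop] (fun x => Real.exp (-(min 1 s.re) * x)) := by
  have h : (fun x : ℝ => (1 + (s - 1) * qq x)) =O[atTop] (fun _ => (1:ℝ)) := by
    have : Tendsto (fun x : ℝ => Complex.exp (-(1 * x))) atTop (𝓝 0) := by
      refine (exp_top 1 (b := 1) (by simp)).trans_tendsto ?_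
      simpa using Real.tendsto_exp_neg_atTop_nhds_zero
    have h2 := ((this.const_sub 1).const_mul (s - 1)).const_add 1
    simp only [one_mul] at h2
    exact h2.isBigO_one ℝ
  refine div_q2_top (IsBigO.sub ?_ (exp_top 1 (by simp)))
  simpa using (exp_top s (b := min 1 s.re) (by simp)).mul h

lemma dInt_int {s : ℂ} (hs : 0 < s.re) : IntegrableOn (dInt s) (Ioi 0) :=
  aux_int_Ioi (lt_min one_pos hs) (dInt_cont s) (dInt_zero s) (dInt_top s)

lemma pInt_int {s : ℂ} (hs : 0 < s.re) : IntegrableOn (pInt s) (Ioi 0) :=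
  aux_int_Ioi (lt_min one_pos hs) (pInt_cont s) (pInt_zero s) (pInt_top s)

lemma dInt_limit (s : ℂ) : Tendsto (dInt s) (𝓝[>] 0) (𝓝 (s - 1)) := by
  have key : ∀ z : ℂ, Tendsto (fun x : ℝ => (x:ℂ)⁻¹ * (Complex.exp (-(z * x)) - 1)) (𝓝[>] 0)
      (𝓝 (-z)) := by
    intro z
    have hd : HasDerivAt (fun x : ℝ => Complex.exp (-(z * x))) (-z) 0 := by
      have h1 : HasDerivAt (fun x : ℂ => Complex.exp (-(z * x))) (-z) ((0:ℝ):ℂ) := by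
        have := (((hasDerivAt_id ((0:ℝ):ℂ)).const_mul z).neg).cexp
        simpa using this
      exact h1.comp_ofReal
    have := hd.tendsto_slope_zero_right
    simpa using this
  have h := ((key 1).sub (key s)).div (key 1).neg (by simp)
  have e : (-1 - -s) / (- -1) = s - 1 := by ring
  rw [e] at h
  refine h.congr' ?_
  filter_upwards [self_mem_nhdsWithin] with x hx
  have hx0 : (x:ℂ) ≠ 0 := by exact_mod_cast (ne_of_gt hx)
  have hq := qq_ne hx
  simp only [dInt]
  have : -((x:ℂ)⁻¹ * (Complex.exp (-(1 * x)) - 1)) = (x:ℂ)⁻¹ * qq x := by simp [qq]; ring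
  rw [Pi.div_apply, this, ← mul_sub, mul_div_mul_left _ _ (inv_ne_zero hx0)]
  congr 1
  ring

lemma pInt_integral {s : ℂ} (hs : 0 < s.re) : ∫ x in Ioi (0:ℝ), pInt s x = 1 - s := by
  have h := integral_Ioi_of_hasDerivAt_of_tendsto (a := 0) (m := 0) (f' := pInt s)
    (f := Function.update (dInt s) 0 (s - 1)) ?_ ?_ (pInt_int hs) ?_
  · rw [h]; simp
  · rw [continuousWithinAt_update_same]
    refine (dInt_limit s).mono_left (nhdsWithin_mono _ ?_)
    intro x hx
    exact lt_of_le_of_ne hx.1 (Ne.symm hx.2)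
  · intro x hx
    have hE : ∀ z : ℂ, HasDerivAt (fun x : ℝ => Complex.exp (-(z * x)))
        (Complex.exp (-(z * x)) * (-z)) x := by
      intro z
      have h1 := (((hasDerivAt_id (x:ℂ)).const_mul z).neg).cexp
      simpa using h1.comp_ofReal
    have hq : HasDerivAt qq (Complex.exp (-(1 * x))) x := by
      have := (hE 1).const_sub 1
      simp only [mul_neg, mul_one, neg_neg] at this
      refine this.congr_of_eventuallyEq (Eventually.of_forall fun y => ?_)
      simp [qq]
    have := ((hE 1).sub (hE s)).div hq (qq_ne hx)
    refine (this.congr_of_eventuallyEq ?_).congr_deriv ?_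
    · filter_upwards [lt_mem_nhds hx] with y hy
      rw [Function.update_of_ne hy.ne']
      rfl
    · simp only [pInt, Pi.sub_apply]
      congr 1
      have : Complex.exp (-(1 * (x:ℂ))) = 1 - qq x := by simp [qq]
      rw [this]
      ring
  · have h1 : Tendsto (dInt s) atTop (𝓝 0) := by
      refine (dInt_top s).trans_tendsto ?_
      have hb : 0 < min 1 s.re := lt_min one_pos hs
      have := Real.tendsto_exp_neg_atTop_nhds_zero.comp (tendsto_id.const_mul_atTop hb)
      refine this.congr fun x => ?_
      simp
    refine h1.congr' ?_
    filter_upwards [eventually_gt_atTop 0] with y hy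
    rw [Function.update_of_ne (ne_of_gt hy)]

/-- The integrand on the unit interval. -/
noncomputable def tInt (s : ℂ) (t : ℝ) : ℂ := ((t:ℂ) ^ (s - 1) - 1) * (1 - (t:ℂ))⁻¹

lemma image_exp : Set.image (fun x : ℝ => Real.exp (-x)) (Ioi 0) = Ioo 0 1 := by
  ext t
  constructor
  · rintro ⟨x, hx, rfl⟩
    have hx' : 0 < x := hx
    exact ⟨Real.exp_pos _, by simpa using hx'⟩
  · rintro ⟨h0, h1⟩
    refine ⟨-Real.log t, ?_, ?_⟩
    · simpa using Real.log_neg h0 h1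
    · simp [Real.exp_log h0]

lemma exp_hasDeriv (x : ℝ) : HasDerivWithinAt (fun x : ℝ => Real.exp (-x)) (-Real.exp (-x))
    (Ioi 0) x := by
  have := ((hasDerivAt_id x).neg).exp
  simpa using this.hasDerivWithinAt

lemma exp_inj : InjOn (fun x : ℝ => Real.exp (-x)) (Ioi 0) := by
  intro x _ y _ h
  simpa using h

lemma tInt_comp (s : ℂ) (x : ℝ) :
    |-Real.exp (-x)| • tInt s (Real.exp (-x)) = -dInt s x := by
  rw [abs_neg, abs_of_pos (Real.exp_pos _)]
  have h0 : ((Real.exp (-x) : ℝ) : ℂ) ≠ 0 := by exact_mod_cast (Real.exp_pos _).ne'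
  have h1 : ((Real.exp (-x) : ℝ) : ℂ) ^ (s - 1) = Complex.exp (-((s - 1) * x)) := by
    rw [Complex.cpow_def_of_ne_zero h0, ← Complex.ofReal_log (Real.exp_pos _).le, Real.log_exp]
    congr 1
    push_cast
    ring
  have h2 : Complex.exp (-(s * x)) = Complex.exp (-(x:ℂ)) * Complex.exp (-((s - 1) * x)) := by
    rw [← Complex.exp_add]
    congr 1
    ring
  rw [tInt, h1, dInt, h2, Complex.real_smul, qq]
  simp only [Complex.ofReal_exp, Complex.ofReal_neg, one_mul]
  ring

lemma tInt_int {s : ℂ} (hs : 0 < s.re) : IntegrableOn (tInt s) (Ioo 0 1) := by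
  rw [← image_exp, integrableOn_image_iff_integrableOn_abs_deriv_smul measurableSet_Ioi
    (fun x _ => exp_hasDeriv x) exp_inj]
  simp only [tInt_comp]
  exact (dInt_int hs).neg

lemma tInt_integral (s : ℂ) :
    ∫ t in (0:ℝ)..1, tInt s t = - ∫ x in Ioi (0:ℝ), dInt s x := by
  rw [intervalIntegral.integral_of_le zero_le_one, integral_Ioc_eq_integral_Ioo,
    ← image_exp, integral_image_eq_integral_abs_deriv_smul measurableSet_Ioi
    (fun x _ => exp_hasDeriv x) exp_inj]
  simp only [tInt_comp]
  rw [integral_neg]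

lemma beta_limit {s : ℂ} (hs : 0 < s.re) :
    Tendsto (fun ε : ℝ => Complex.betaIntegral s ε - Complex.betaIntegral 1 ε) (𝓝[>] 0)
      (𝓝 (∫ t in (0:ℝ)..1, tInt s t)) := by
  have hmem : ∀ᶠ ε : ℝ in 𝓝[>] 0, ε ∈ Ioo (0:ℝ) 1 := Ioo_mem_nhdsGT zero_lt_one
  have h1 : ∀ ε ∈ Ioo (0:ℝ) 1, Complex.betaIntegral s ε - Complex.betaIntegral 1 ε
      = ∫ t in (0:ℝ)..1, ((t:ℂ) ^ (s - 1) * (1 - (t:ℂ)) ^ ((ε:ℂ) - 1)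
        - (t:ℂ) ^ ((1:ℂ) - 1) * (1 - (t:ℂ)) ^ ((ε:ℂ) - 1)) := by
    intro ε hε
    rw [intervalIntegral.integral_sub]
    · rfl
    · exact Complex.betaIntegral_convergent hs (by simpa using hε.1)
    · exact Complex.betaIntegral_convergent (by simp) (by simpa using hε.1)
  have h2 : Tendsto (fun ε : ℝ => ∫ t in (0:ℝ)..1,
      ((t:ℂ) ^ (s - 1) * (1 - (t:ℂ)) ^ ((ε:ℂ) - 1)
        - (t:ℂ) ^ ((1:ℂ) - 1) * (1 - (t:ℂ)) ^ ((ε:ℂ) - 1))) (𝓝[>] 0)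
      (𝓝 (∫ t in (0:ℝ)..1, tInt s t)) := by
    simp only [intervalIntegral.integral_of_le zero_le_one, integral_Ioc_eq_integral_Ioo]
    refine tendsto_integral_filter_of_dominated_convergence (fun t => ‖tInt s t‖) ?_ ?_
      (tInt_int hs).norm ?_
    · filter_upwards [hmem] with ε hε
      have a1 := Complex.betaIntegral_convergent hs (v := ε) (by simpa using hε.1)
      have a2 := Complex.betaIntegral_convergent (u := 1) (v := ε) (by simp) (by simpa using hε.1)
      have a3 := (a1.sub a2)
      rw [intervalIntegrable_iff_integrableOn_Ioo_of_le zero_le_one] at a3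
      exact a3.aestronglyMeasurable
    · filter_upwards [hmem] with ε hε
      filter_upwards [ae_restrict_mem measurableSet_Ioo] with t ht
      have ht1 : 0 < 1 - t := by linarith [ht.2]
      simp only [sub_self, Complex.cpow_zero]
      rw [← sub_mul, tInt, norm_mul, norm_mul]
      gcongr
      rw [norm_inv]
      have : (1 - (t:ℂ)) = ((1 - t : ℝ) : ℂ) := by push_cast; ring
      rw [this, Complex.norm_cpow_eq_rpow_re_of_pos ht1, Complex.norm_real,
        Real.norm_of_nonneg ht1.le, ← Real.rpow_neg_one]
      apply Real.rpow_le_rpow_of_exponent_ge ht1 (by linarith [ht.1])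
      simp [hε.1.le]
    · filter_upwards [ae_restrict_mem measurableSet_Ioo] with t ht
      have ht1 : 1 - (t:ℂ) ≠ 0 := by
        have : (1 - (t:ℂ)) = ((1 - t : ℝ) : ℂ) := by push_cast; ring
        rw [this]
        have : 1 - t ≠ 0 := by linarith [ht.2]
        exact_mod_cast this
      simp only [sub_self, Complex.cpow_zero]
      simp_rw [← sub_mul]
      rw [tInt]
      refine Tendsto.const_mul _ ?_
      have hc : Continuous (fun ε : ℝ => (1 - (t:ℂ)) ^ ((ε:ℂ) - 1)) := by
        refine Continuous.const_cpow (by fun_prop) (Or.inl ht1)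
      have := (hc.tendsto 0).mono_left (nhdsWithin_le_nhds (s := Ioi 0))
      simpa [Complex.cpow_neg_one] using this
  refine h2.congr' ?_
  filter_upwards [hmem] with ε hε
  exact (h1 ε hε).symm

lemma beta_limit' {s : ℂ} (hs : 0 < s.re) :
    Tendsto (fun ε : ℝ => Complex.betaIntegral s ε - Complex.betaIntegral 1 ε) (𝓝[>] 0)
      (𝓝 (complexDigamma 1 - complexDigamma s)) := by
  have key : ∀ z : ℂ, 0 < z.re → HasDerivAt
      (fun ε : ℝ => Complex.Gamma z / Complex.Gamma (z + ε)) (-complexDigamma z) 0 := by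
    intro z hz
    have hne := Complex.Gamma_ne_zero_of_re_pos hz
    have hd : DifferentiableAt ℂ Complex.Gamma z := by
      refine Complex.differentiableAt_Gamma z fun m h => ?_
      rw [h] at hz
      simp at hz
      have : (0:ℝ) ≤ m := by positivity
      linarith
    have h0 : HasDerivAt Complex.Gamma (deriv Complex.Gamma z) (z + ((0:ℝ):ℂ)) := by
      simpa using hd.hasDerivAt
    have h1 : HasDerivAt (fun w : ℂ => Complex.Gamma (z + w)) (deriv Complex.Gamma z)
        ((0:ℝ):ℂ) := by
      simpa using h0.comp_const_add z ((0:ℝ):ℂ)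
    have h2 := ((hasDerivAt_const ((0:ℝ):ℂ) (Complex.Gamma z)).div h1 (by simpa using hne))
    refine h2.comp_ofReal.congr_deriv ?_
    simp only [complexDigamma, Complex.ofReal_zero, add_zero]
    field_simp
    ring
  have hk := ((key s hs).sub (key 1 (by simp))).tendsto_slope_zero_right
  have hG : Tendsto (fun ε : ℝ => (ε:ℂ) * Complex.Gamma ε) (𝓝[>] 0) (𝓝 1) := by
    refine Complex.tendsto_self_mul_Gamma_nhds_zero.comp ?_
    refine tendsto_nhdsWithin_iff.2 ⟨?_, ?_⟩
    · have : Continuous (fun ε : ℝ => (ε:ℂ)) := by fun_prop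
      simpa using (this.tendsto 0).mono_left (nhdsWithin_le_nhds (s := Ioi 0))
    · filter_upwards [self_mem_nhdsWithin] with x hx
      have : x ≠ 0 := ne_of_gt hx
      simpa using this
  have := hG.mul hk
  have e : 1 * (-complexDigamma s - -complexDigamma 1) = complexDigamma 1 - complexDigamma s := by
    ring
  rw [e] at this
  refine this.congr' ?_
  filter_upwards [self_mem_nhdsWithin] with ε hε
  have hε0 : (0:ℝ) < ε := hε
  have hne : (ε:ℂ) ≠ 0 := by exact_mod_cast hε0.ne'
  have hs0 := Complex.Gamma_ne_zero_of_re_pos hs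
  rw [Complex.betaIntegral_eq_Gamma_mul_div _ _ hs (by simpa using hε0),
    Complex.betaIntegral_eq_Gamma_mul_div _ _ (by simp) (by simpa using hε0)]
  simp only [Pi.sub_apply, zero_add, Complex.ofReal_zero, add_zero, Complex.Gamma_one,
    Complex.real_smul, Complex.ofReal_inv]
  rw [div_self hs0]
  field_simp
  ring

lemma digamma_integral {s : ℂ} (hs : 0 < s.re) :
    complexDigamma s = (∫ x in Ioi (0:ℝ), dInt s x) - Real.eulerMascheroniConstant := by
  have h := tendsto_nhds_unique (beta_limit hs) (beta_limit' hs)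
  have h1 : complexDigamma 1 = - Real.eulerMascheroniConstant := by
    rw [complexDigamma, Complex.hasDerivAt_Gamma_one.deriv, Complex.Gamma_one, div_one]
  rw [tInt_integral, h1] at h
  linear_combination h

noncomputable def a1 (c : ℂ) (x : ℝ) : ℂ :=
  (x * Complex.exp (-(1 * x)) * (1 - Complex.exp (-(c * x)))) / qq x ^ 2

noncomputable def a2 (x : ℝ) : ℂ :=
  (Complex.exp (-(1 * x)) * (1 - x - Complex.exp (-(1 * x)))) / qq x ^ 2

noncomputable def a3 (x : ℝ) : ℂ := Complex.exp (-(1 * x)) / qq x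

noncomputable def aInt (c : ℂ) (x : ℝ) : ℂ :=
  Complex.exp (-(1 * x)) / qq x
    - (if x < 1 then (x:ℂ) else 0) * Complex.exp (-((c + 1) * x)) / qq x ^ 2

lemma a1_int (c : ℂ) : IntegrableOn (a1 c) (Ioo 0 1) := by
  have := qq_cont
  refine (aux_int_Ioc ?_ ?_).mono_set Ioo_subset_Ioc_self
  · refine ContinuousOn.div (by fun_prop) (by fun_prop) fun x hx => pow_ne_zero 2 (qq_ne hx)
  · refine div_q2_zero ?_
    have h := ((x_zero 1).mul (exp_zero1 c)).mul
      (bdd_zero (f := fun x : ℝ => -Complex.exp (-(1 * x))) (by fun_prop))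
    refine (h.congr_left fun x => ?_).congr_right fun x => ?_
    · ring
    · ring

lemma a2_int : IntegrableOn a2 (Ioo 0 1) := by
  have := qq_cont
  refine (aux_int_Ioc ?_ ?_).mono_set Ioo_subset_Ioc_self
  · refine ContinuousOn.div (by fun_prop) (by fun_prop) fun x hx => pow_ne_zero 2 (qq_ne hx)
  · refine div_q2_zero ?_
    have h := (exp_zero2 1).mul
      (bdd_zero (f := fun x : ℝ => -Complex.exp (-(1 * x))) (by fun_prop))
    refine (h.congr_left fun x => ?_).congr_right fun x => ?_
    · ring
    · ring

lemma a3_int : IntegrableOn a3 (Ici 1) := by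
  have := qq_cont
  rw [integrableOn_Ici_iff_integrableOn_Ioi]
  refine aux_int_tail one_pos ?_ (div_q_top (exp_top 1 (by simp)))
  refine ContinuousOn.div (by fun_prop) (by fun_prop) fun x hx => (qq_ne hx)

lemma aInt_eq1 (c : ℂ) : EqOn (fun x => a1 c x + a2 x) (aInt c) (Ioo 0 1) := by
  intro x hx
  have hq := qq_ne hx.1
  have e : Complex.exp (-((c + 1) * x)) = Complex.exp (-(1 * x)) * Complex.exp (-(c * x)) := by
    rw [← Complex.exp_add]
    congr 1
    ring
  simp only [a1, a2, aInt, if_pos hx.2, e]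
  field_simp
  simp only [qq]
  ring

lemma aInt_eq2 (c : ℂ) : EqOn a3 (aInt c) (Ici 1) := by
  intro x hx
  simp [a3, aInt, not_lt.2 (mem_Ici.1 hx)]

lemma aInt_int (c : ℂ) : IntegrableOn (aInt c) (Ioi 0) ∧ ∫ x in Ioi (0:ℝ), aInt c x =
    (∫ x in (0:ℝ)..1, a1 c x) + (∫ x in (0:ℝ)..1, a2 x) + ∫ x in Ioi (1:ℝ), a3 x := by
  have hu : Ioi (0:ℝ) = Ioo 0 1 ∪ Ici 1 := (Ioo_union_Ici_eq_Ioi zero_lt_one).symm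
  have i1 : IntegrableOn (aInt c) (Ioo 0 1) :=
    ((a1_int c).add a2_int).congr_fun (aInt_eq1 c) measurableSet_Ioo
  have i2 : IntegrableOn (aInt c) (Ici 1) := a3_int.congr_fun (aInt_eq2 c) measurableSet_Ici
  refine ⟨hu ▸ i1.union i2, ?_⟩
  rw [hu, setIntegral_union ?_ measurableSet_Ici i1 i2,
    ← setIntegral_congr_fun measurableSet_Ioo (aInt_eq1 c),
    ← setIntegral_congr_fun measurableSet_Ici (aInt_eq2 c), integral_add (a1_int c) a2_int,
    intervalIntegral.integral_of_le zero_le_one, intervalIntegral.integral_of_le zero_le_one,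
    integral_Ioc_eq_integral_Ioo, integral_Ioc_eq_integral_Ioo, integral_Ici_eq_integral_Ioi]
  rw [Set.disjoint_left]
  intro x hx hx'
  exact absurd hx.2 (not_lt.2 hx')

lemma integrand_eq (β l x : ℝ) (hx : 0 < x) :
    (Complex.exp (Complex.I * l * x) - 1 - Complex.I * l * x * (if x < 1 then 1 else 0)) *
          ((Real.exp (β * x) * (Real.exp x - 1) ^ (-(2:ℝ)) : ℝ) : ℂ)
    = Complex.I * l * aInt (1 - β) x
      + (-(Complex.I * l) + 1 - β) * dInt (-(Complex.I * l) + 2 - β) x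
      - (1 - β) * dInt (2 - β) x
      + (pInt (-(Complex.I * l) + 2 - β) x - pInt (2 - β) x) := by
  have hq := qq_ne hx
  have hE : Complex.exp x ≠ 0 := Complex.exp_ne_zero _
  have h1 : 0 < Real.exp x - 1 := by linarith [Real.add_one_lt_exp hx.ne']
  have e0 : ((Real.exp (β * x) * (Real.exp x - 1) ^ (-(2:ℝ)) : ℝ) : ℂ)
      = Complex.exp (-((2 - β) * x)) / qq x ^ 2 := by
    rw [Real.rpow_neg h1.le, Real.rpow_two]
    have : (Complex.exp x - 1) = Complex.exp x * qq x := by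
      rw [qq, mul_sub, ← Complex.exp_add]; simp
    push_cast
    rw [this]
    have h2 : Complex.exp (-((2 - β) * x)) = Complex.exp (β * x) / Complex.exp x ^ 2 := by
      rw [← Complex.exp_nat_mul, ← Complex.exp_sub]
      congr 1
      push_cast
      ring
    rw [h2]
    field_simp
  have e1 : Complex.exp (-((-(Complex.I * l) + 2 - β) * x))
      = Complex.exp (Complex.I * l * x) * Complex.exp (-((2 - β) * x)) := by
    rw [← Complex.exp_add]
    congr 1
    ring
  have e2 : Complex.exp (-((1 - (β:ℂ) + 1) * x)) = Complex.exp (-((2 - β) * x)) := by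
    congr 1
    ring
  have e3 : (if x < 1 then (x:ℂ) else 0) = x * (if x < 1 then 1 else 0) := by
    split_ifs <;> simp
  rw [e0]
  simp only [aInt, dInt, pInt, e1, e2, e3]
  field_simp
  ring

theorem lamperti_stable_characteristic_exponent_index_one
    (β l a : ℝ) (hβ : β < 2)
    (ha : a =
      (∫ x in (0:ℝ)..1,
          x * Real.exp (-x) * (1 - Real.exp (-(1 - β) * x)) / (1 - Real.exp (-x)) ^ 2)
        + (∫ x in (0:ℝ)..1,
            Real.exp (-x) * (1 - x - Real.exp (-x)) / (1 - Real.exp (-x)) ^ 2)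
        + ∫ x in Set.Ioi (1:ℝ), Real.exp (-x) / (1 - Real.exp (-x))) :
    ∫ x in Set.Ioi (0:ℝ),
        (Complex.exp (Complex.I * l * x) - 1 - Complex.I * l * x * (if x < 1 then 1 else 0)) *
          ((Real.exp (β * x) * (Real.exp x - 1) ^ (-(2:ℝ)) : ℝ) : ℂ)
      = Complex.I * l * (a + 1 - Real.eulerMascheroniConstant) +
          (-(Complex.I * l) + 1 - β) * complexDigamma (-(Complex.I * l) + 2 - β)
          - (1 - β) * complexDigamma (2 - β) := by
  have hs : 0 < (-(Complex.I * l) + 2 - (β:ℂ)).re := by simp; linarith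
  have hs0 : 0 < (2 - (β:ℂ)).re := by simp; linarith
  have haC : (a:ℂ) = ∫ x in Ioi (0:ℝ), aInt (1 - β) x := by
    rw [(aInt_int _).2, ha]
    push_cast
    rw [← intervalIntegral.integral_ofReal, ← intervalIntegral.integral_ofReal,
      ← integral_complex_ofReal]
    refine congr_arg₂ _ (congr_arg₂ _ ?_ ?_) ?_
    · congr 1
      ext x
      have : -((1 - (β:ℂ)) * x) = (β - 1) * x := by ring
      simp [a1, qq, this]
    · congr 1
      ext x
      simp [a2, qq]
    · congr 1
      ext x
      simp [a3, qq]
  rw [setIntegral_congr_fun measurableSet_Ioi (fun x hx => integrand_eq β l x hx)]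
  have iA := (aInt_int (1 - β)).1.const_mul (Complex.I * l)
  have iD := (dInt_int hs).const_mul (-(Complex.I * l) + 1 - β)
  have iD0 := (dInt_int hs0).const_mul (1 - (β:ℂ))
  have iAD : IntegrableOn (fun x => Complex.I * l * aInt (1 - β) x
      + (-(Complex.I * l) + 1 - β) * dInt (-(Complex.I * l) + 2 - β) x) (Ioi 0) := iA.add iD
  have iADD : IntegrableOn (fun x => Complex.I * l * aInt (1 - β) x
      + (-(Complex.I * l) + 1 - β) * dInt (-(Complex.I * l) + 2 - β) x
      - (1 - β) * dInt (2 - β) x) (Ioi 0) := iAD.sub iD0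
  have iP : IntegrableOn (fun x => pInt (-(Complex.I * l) + 2 - β) x - pInt (2 - β) x) (Ioi 0) :=
    (pInt_int hs).sub (pInt_int hs0)
  rw [integral_add iADD iP, integral_sub iAD iD0, integral_add iA iD, integral_sub (pInt_int hs) (pInt_int hs0),
    pInt_integral hs, pInt_integral hs0, integral_const_mul, integral_const_mul,
    integral_const_mul, ← haC, digamma_integral hs, digamma_integral hs0]
  ring
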